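/- arXiv:2112.12034 — 7 statements merged into one kernel-verified Lean document; each statement's English description precedes it below -/
import Mathlib

section
/- Let G be a simple graph on Fin N and θ : Fin N → ℝ. Then θ is a completely degenerate equilibrium of the identical Kuramoto system on G (i.e., for every vertex k, ∑_j a(j,k)·sin(θ j − θ k) = 0, and for every edge {j,k}, cos(θ j − θ k) = 0) if and only if for every vertex k, the set of neighbors j of k with θ j ≡ θ k + π/2 (mod 2π) and the set of neighbors j of k with θ j ≡ θ k − π/2 (mod 2π) have equal cardinality and together comprise all neighbors of k. -/
open Real

open Classical in
/-- Adjacency indicator: `1` if `j` and `k` are adjacent in `G`, `0` otherwise. -/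
noncomputable def adjInd {V : Type*} (G : SimpleGraph V) (j k : V) : ℝ :=
  if G.Adj j k then 1 else 0

/-- A completely degenerate equilibrium of the identical Kuramoto system on `G`. -/
def IsCDE {V : Type*} [Fintype V] (G : SimpleGraph V) (θ : V → ℝ) : Prop :=
  (∀ k, ∑ j, adjInd G j k * Real.sin (θ j - θ k) = 0) ∧
  (∀ j k, G.Adj j k → Real.cos (θ j - θ k) = 0)

/-! Along an edge, a zero cosine of the phase difference means a sine of `1` or `-1`, that is, a
phase difference of `π / 2` or `-π / 2` modulo `2π`. The sine sum at a vertex is then the number of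
neighbors that lead by a quarter turn minus the number that lag by one, so it vanishes exactly when
the two numbers agree. -/

theorem exists_eq_add_pi_div_two_iff_sin_sub_eq_one {x y : ℝ} :
    (∃ m : ℤ, x = y + π / 2 + 2 * π * m) ↔ sin (x - y) = 1 := by
  rw [sin_eq_one_iff]
  exact exists_congr fun m => by constructor <;> intro h <;> linarith

theorem exists_eq_sub_pi_div_two_iff_sin_sub_eq_neg_one {x y : ℝ} :
    (∃ m : ℤ, x = y - π / 2 + 2 * π * m) ↔ sin (x - y) = -1 := by
  rw [sin_eq_neg_one_iff]
  exact exists_congr fun m => by constructor <;> intro h <;> linarith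

theorem setOf_and_union_setOf_and_eq_iff {α : Type*} {p q r : α → Prop} :
    {a | p a ∧ q a} ∪ {a | p a ∧ r a} = {a | p a} ↔ ∀ a, p a → q a ∨ r a := by
  simp only [Set.ext_iff, Set.mem_union, Set.mem_ofPred_eq, ← and_or_left, and_iff_left_iff_imp]

theorem sum_eq_ncard_eq_one_sub_ncard_eq_neg_one {ι R : Type*} [AddCommGroupWithOne R]
    [NeZero (2 : R)] {s : Finset ι} {f : ι → R} (hf : ∀ i ∈ s, f i = 1 ∨ f i = -1) :
    ∑ i ∈ s, f i =
      ({i | i ∈ s ∧ f i = 1}.ncard : R) - ({i | i ∈ s ∧ f i = -1}.ncard : R) := by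
  classical
  have one_ne_neg_one : (1 : R) ≠ -1 := fun h =>
    two_ne_zero (α := R) <| one_add_one_eq_two.symm.trans <| eq_neg_iff_add_eq_zero.1 h
  have eq_ite_sub_ite : ∀ i ∈ s,
      f i = (if f i = 1 then 1 else 0) - (if f i = -1 then 1 else 0) := by
    intro i hi
    rcases hf i hi with h | h <;> simp [h, one_ne_neg_one, one_ne_neg_one.symm]
  simp only [← Finset.coe_filter, Set.ncard_coe_finset]
  rw [Finset.sum_congr rfl eq_ite_sub_ite, Finset.sum_sub_distrib,
    Finset.natCast_card_filter, Finset.natCast_card_filter]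

open Classical in
theorem sum_adjInd_mul {V : Type*} [Fintype V] (G : SimpleGraph V) (k : V) (f : V → ℝ) :
    ∑ j, adjInd G j k * f j = ∑ j with G.Adj j k, f j := by
  simp only [adjInd, ite_mul, one_mul, zero_mul, Finset.sum_filter]

theorem sum_adjInd_mul_sin_sub_eq_ncard_sub_ncard {V : Type*} [Fintype V] {G : SimpleGraph V}
    {θ : V → ℝ} {k : V} (hcos : ∀ j, G.Adj j k → cos (θ j - θ k) = 0) :
    ∑ j, adjInd G j k * sin (θ j - θ k) =
      ({j | G.Adj j k ∧ sin (θ j - θ k) = 1}.ncard : ℝ) -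
        ({j | G.Adj j k ∧ sin (θ j - θ k) = -1}.ncard : ℝ) := by
  classical
  rw [sum_adjInd_mul, sum_eq_ncard_eq_one_sub_ncard_eq_neg_one fun j hj =>
    cos_eq_zero_iff_sin_eq.1 (hcos j ((Finset.mem_filter_univ j).1 hj))]
  simp only [Finset.mem_filter_univ]

theorem stmt0_general {V : Type*} [Fintype V] (G : SimpleGraph V) (θ : V → ℝ) :
    IsCDE G θ ↔
      ∀ k : V,
        ({j | G.Adj j k ∧ ∃ m : ℤ, θ j = θ k + π / 2 + 2 * π * m} : Set V).ncard =
            ({j | G.Adj j k ∧ ∃ m : ℤ, θ j = θ k - π / 2 + 2 * π * m} : Set V).ncard ∧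
          ({j | G.Adj j k ∧ ∃ m : ℤ, θ j = θ k + π / 2 + 2 * π * m} ∪
              {j | G.Adj j k ∧ ∃ m : ℤ, θ j = θ k - π / 2 + 2 * π * m} : Set V) =
            {j : V | G.Adj j k} := by
  simp only [exists_eq_add_pi_div_two_iff_sin_sub_eq_one,
    exists_eq_sub_pi_div_two_iff_sin_sub_eq_neg_one, setOf_and_union_setOf_and_eq_iff,
    ← cos_eq_zero_iff_sin_eq]
  rw [IsCDE, forall_comm (α := V) (β := V), ← forall_and]
  refine forall_congr' fun k => and_congr_left fun hcos => ?_
  rw [sum_adjInd_mul_sin_sub_eq_ncard_sub_ncard hcos, sub_eq_zero, Nat.cast_inj]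

/-- `θ` is a completely degenerate equilibrium iff for every vertex `k`, the
neighbors of `k` with phase `θ k + π/2 (mod 2π)` and those with phase `θ k - π/2 (mod 2π)`
have equal cardinality and together comprise all neighbors of `k`. -/
theorem stmt0 {N : ℕ} (G : SimpleGraph (Fin N)) (θ : Fin N → ℝ) :
    IsCDE G θ ↔
      ∀ k : Fin N,
        ({j | G.Adj j k ∧ ∃ m : ℤ, θ j = θ k + π / 2 + 2 * π * m} : Set (Fin N)).ncard =
            ({j | G.Adj j k ∧ ∃ m : ℤ, θ j = θ k - π / 2 + 2 * π * m} : Set (Fin N)).ncard ∧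
          ({j | G.Adj j k ∧ ∃ m : ℤ, θ j = θ k + π / 2 + 2 * π * m} ∪
              {j | G.Adj j k ∧ ∃ m : ℤ, θ j = θ k - π / 2 + 2 * π * m} : Set (Fin N)) =
            {j : Fin N | G.Adj j k} :=
  stmt0_general G θ
end

section
/- Let G be a simple graph on Fin N admitting a completely degenerate equilibrium of the identical Kuramoto system. Then G is bipartite (i.e., G is 2-colorable: there is a function c : Fin N → Fin 2 such that adjacent vertices receive distinct colors). -/
open Real

/-! Cut the line into half-open intervals of length `π / 2`. Two phases whose difference has zero
cosine differ by an odd multiple of `π / 2`, so the indices of the intervals containing them have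
opposite parities. Hence the parity of the interval index colours the graph. -/

theorem odd_floor_sub_floor_of_cos_sub_eq_zero {x y : ℝ} (h : cos (x - y) = 0) :
    Odd (⌊x / (π / 2)⌋ - ⌊y / (π / 2)⌋) := by
  obtain ⟨n, hn⟩ := cos_eq_zero_iff.mp h
  have quarter_turns : x / (π / 2) = y / (π / 2) + (2 * n + 1 : ℤ) := by
    push_cast
    field_simp
    linarith
  rw [quarter_turns, Int.floor_add_intCast, add_sub_cancel_left]
  exact odd_two_mul_add_one n

theorem isBipartite_of_odd_sub {V : Type*} {G : SimpleGraph V} (f : V → ℤ)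
    (hf : ∀ j k, G.Adj j k → Odd (f j - f k)) : G.IsBipartite := by
  have parity_ne {j k : V} (hjk : G.Adj j k) : decide (Even (f j)) ≠ decide (Even (f k)) := by
    rw [ne_eq, decide_eq_decide, ← Int.even_sub, Int.not_even_iff_odd]
    exact hf j k hjk
  exact (SimpleGraph.Coloring.mk (fun v => decide (Even (f v))) parity_ne).colorable

theorem stmt2_general {V : Type*} (G : SimpleGraph V)
    (h : ∃ θ : V → ℝ, ∀ j k, G.Adj j k → cos (θ j - θ k) = 0) : G.IsBipartite := by
  obtain ⟨θ, hθ⟩ := h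
  exact isBipartite_of_odd_sub (fun v => ⌊θ v / (π / 2)⌋) fun j k hjk =>
    odd_floor_sub_floor_of_cos_sub_eq_zero (hθ j k hjk)

/-- if `G` admits a completely degenerate equilibrium, then `G` is bipartite,
i.e. 2-colorable. -/
theorem stmt2 {N : ℕ} (G : SimpleGraph (Fin N))
    (h : ∃ θ : Fin N → ℝ, IsCDE G θ) :
    ∃ c : Fin N → Fin 2, ∀ j k : Fin N, G.Adj j k → c j ≠ c k := by
  obtain ⟨c⟩ := stmt2_general G (h.imp fun _ hθ => hθ.2)
  exact ⟨c, fun _ _ hjk => c.valid hjk⟩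
end

section
/- For every natural number N ≥ 6 there exists a connected simple graph on Fin N admitting a completely degenerate equilibrium of the identical Kuramoto system. -/
open Real

/-! On a bipartite graph, give the left vertices phases `± π / 2` and the right vertices phases
`0, π`. Every phase difference along an edge is then an odd multiple of `π / 2`, and its sine is up
to sign the product of a sign on each end; so one gets a completely degenerate equilibrium as soon
as the signs of the neighbors of every vertex cancel. Take on the right a hub of sign `1` and `k`
sinks of sign `-1`, and on the left `m` pairs of twins of opposite signs, each pair joined to the
hub and to a single sink. If every sink is used, this is a connected graph on `2 * m + k + 1`
vertices, and `k = 1`, `k = 2` give the even and the odd orders respectively. -/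

section Bipartite

variable {α β : Type*} {r : α → β → Prop} {ε : α → ℤˣ} {δ : β → ℤˣ}

/-- The bipartite graph whose edges are the pairs related by `r`. -/
def bipartiteGraphOfRel (r : α → β → Prop) : SimpleGraph (α ⊕ β) where
  Adj
    | .inl a, .inr b => r a b
    | .inr b, .inl a => r a b
    | _, _ => False
  symm := ⟨by rintro (a | b) (a' | b') h <;> exact h⟩
  loopless := ⟨by rintro (a | b) h <;> exact h⟩

@[simp]
lemma not_bipartiteGraphOfRel_adj_inl_inl {a a' : α} :
    ¬ (bipartiteGraphOfRel r).Adj (.inl a) (.inl a') :=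
  id

@[simp]
lemma bipartiteGraphOfRel_adj_inl_inr {a : α} {b : β} :
    (bipartiteGraphOfRel r).Adj (.inl a) (.inr b) ↔ r a b :=
  Iff.rfl

@[simp]
lemma bipartiteGraphOfRel_adj_inr_inl {a : α} {b : β} :
    (bipartiteGraphOfRel r).Adj (.inr b) (.inl a) ↔ r a b :=
  Iff.rfl

@[simp]
lemma not_bipartiteGraphOfRel_adj_inr_inr {b b' : β} :
    ¬ (bipartiteGraphOfRel r).Adj (.inr b) (.inr b') :=
  id

/-- The phases attached to signs on the two sides of a bipartite graph: `± π / 2` on the left, and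
on the right `0` for the sign `1` and `π` for the sign `-1`. -/
noncomputable def signPhase (ε : α → ℤˣ) (δ : β → ℤˣ) : α ⊕ β → ℝ :=
  Sum.elim (fun a => (ε a : ℤ) * (π / 2)) (fun b => (1 - (δ b : ℤ)) * (π / 2))

lemma sin_signPhase_inl_sub_inr (a : α) (b : β) :
    Real.sin (signPhase ε δ (.inl a) - signPhase ε δ (.inr b)) = (ε a : ℤ) * (δ b : ℤ) := by
  have phase_diff : signPhase ε δ (.inl a) - signPhase ε δ (.inr b) =
      (ε a : ℤ) * (π / 2) - (1 - (δ b : ℤ)) * (π / 2) := rfl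
  rw [phase_diff]
  obtain hε | hε := Int.units_eq_one_or (ε a) <;> obtain hδ | hδ := Int.units_eq_one_or (δ b) <;>
    norm_num [hε, hδ, Real.sin_sub, mul_div_cancel₀]

lemma sin_signPhase_inr_sub_inl (a : α) (b : β) :
    Real.sin (signPhase ε δ (.inr b) - signPhase ε δ (.inl a)) = -((ε a : ℤ) * (δ b : ℤ)) := by
  rw [← neg_sub, Real.sin_neg, sin_signPhase_inl_sub_inr]

lemma cos_signPhase_inl_sub_inr (a : α) (b : β) :
    Real.cos (signPhase ε δ (.inl a) - signPhase ε δ (.inr b)) = 0 := by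
  have sin_sq : Real.sin (signPhase ε δ (.inl a) - signPhase ε δ (.inr b)) ^ 2 = 1 := by
    rw [sin_signPhase_inl_sub_inr]
    exact_mod_cast Int.isUnit_sq (ε a * δ b).isUnit
  simpa [sin_sq] using Real.cos_sq' (signPhase ε δ (.inl a) - signPhase ε δ (.inr b))

theorem isCDE_signPhase [Fintype α] [Fintype β] [∀ a, DecidablePred (r a)]
    (hε : ∀ b, ∑ a with r a b, (ε a : ℤ) = 0) (hδ : ∀ a, ∑ b with r a b, (δ b : ℤ) = 0) :
    IsCDE (bipartiteGraphOfRel r) (signPhase ε δ) := by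
  constructor
  · rintro (a | b)
    · calc ∑ j, adjInd (bipartiteGraphOfRel r) j (.inl a) *
            Real.sin (signPhase ε δ j - signPhase ε δ (.inl a))
          = ∑ b with r a b, -((ε a : ℤ) * (δ b : ℤ) : ℝ) := by
            simp [adjInd, sin_signPhase_inr_sub_inl, Finset.sum_filter, -Finset.sum_neg_distrib]
        _ = -((ε a : ℤ) * ((∑ b with r a b, (δ b : ℤ) : ℤ) : ℝ)) := by simp [Finset.mul_sum]
        _ = 0 := by simp [hδ a]
    · calc ∑ j, adjInd (bipartiteGraphOfRel r) j (.inr b) *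
            Real.sin (signPhase ε δ j - signPhase ε δ (.inr b))
          = ∑ a with r a b, ((ε a : ℤ) * (δ b : ℤ) : ℝ) := by
            simp [adjInd, sin_signPhase_inl_sub_inr, Finset.sum_filter]
        _ = ((∑ a with r a b, (ε a : ℤ) : ℤ) : ℝ) * (δ b : ℤ) := by simp [Finset.sum_mul]
        _ = 0 := by simp [hε b]
  · rintro (a | b) (a' | b') h
    · exact h.elim
    · exact cos_signPhase_inl_sub_inr a b'
    · rw [← neg_sub, Real.cos_neg, cos_signPhase_inl_sub_inr]
    · exact h.elim

end Bipartite

section Hub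

variable {ι κ : Type*}

/-- The incidence relation of the hub graph of `f`: the twins `(i, 1)` and `(i, -1)` are both joined
to the hub `none` and to the sink `some (f i)`. -/
def HubRel (f : ι → κ) (p : ι × ℤˣ) (o : Option κ) : Prop :=
  o = none ∨ o = some (f p.1)

/-- The signs on the hub and the sinks: `1` at the hub `none`, `-1` at every sink. -/
def hubSign (o : Option κ) : ℤˣ :=
  o.elim 1 fun _ => -1

lemma connected_bipartiteGraphOfRel_hubRel {f : ι → κ} (hf : f.Surjective) :
    (bipartiteGraphOfRel (HubRel f)).Connected := by
  rw [SimpleGraph.connected_iff_exists_forall_reachable]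
  have reachable_twin (p : ι × ℤˣ) :
      (bipartiteGraphOfRel (HubRel f)).Reachable (.inr none) (.inl p) :=
    SimpleGraph.Adj.reachable (Or.inl rfl)
  refine ⟨.inr none, ?_⟩
  rintro (p | _ | c)
  · exact reachable_twin p
  · exact .refl _
  · obtain ⟨i, rfl⟩ := hf c
    exact (reachable_twin (i, 1)).trans (SimpleGraph.Adj.reachable (Or.inr rfl))

lemma isCDE_hub [Fintype ι] [Fintype κ] (f : ι → κ) :
    IsCDE (bipartiteGraphOfRel (HubRel f)) (signPhase Prod.snd hubSign) := by
  classical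
  refine isCDE_signPhase (fun o => ?_) fun p => ?_
  · have twins_cancel (i : ι) :
        ∑ s : ℤˣ, (if HubRel f (i, s) o then (s : ℤ) else 0) = 0 := by
      by_cases h : o = none ∨ o = some (f i) <;> simp [HubRel, UnitsInt.univ, h]
    simp only [Finset.sum_filter, Fintype.sum_prod_type, twins_cancel, Finset.sum_const_zero]
  · have neighbors : ({o | HubRel f p o} : Finset (Option κ)) = {none, some (f p.1)} := by
      ext o
      rw [Finset.mem_filter_univ, HubRel, Finset.mem_insert, Finset.mem_singleton]
    simp [neighbors, hubSign]

end Hub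

lemma IsCDE.comap {V W : Type*} [Fintype V] [Fintype W] {G : SimpleGraph W} {θ : W → ℝ}
    (h : IsCDE G θ) (e : V ≃ W) : IsCDE (G.comap e) (θ ∘ e) :=
  ⟨fun k => (e.sum_comp fun j => adjInd G j (e k) * Real.sin (θ j - θ (e k))).trans (h.1 (e k)),
    fun j k => h.2 (e j) (e k)⟩

lemma exists_connected_isCDE_of_card_eq {V : Type*} [Fintype V] {m k : ℕ} (hk : 0 < k)
    (hkm : k ≤ m) (hV : Fintype.card V = 2 * m + k + 1) :
    ∃ G : SimpleGraph V, G.Connected ∧ ∃ θ : V → ℝ, IsCDE G θ := by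
  have : NeZero k := ⟨hk.ne'⟩
  let f : Fin m → Fin k := Function.invFun (Fin.castLE hkm)
  have hf : f.Surjective := Function.invFun_surjective (Fin.castLE_injective hkm)
  let e : V ≃ (Fin m × ℤˣ) ⊕ Option (Fin k) :=
    Fintype.equivOfCardEq (by simp [hV]; ring)
  exact ⟨(bipartiteGraphOfRel (HubRel f)).comap e,
    (SimpleGraph.Iso.comap e _).connected_iff.2 (connected_bipartiteGraphOfRel_hubRel hf),
    _, (isCDE_hub f).comap e⟩

theorem stmt6_general {V : Type*} [Fintype V] (h4 : 4 ≤ Fintype.card V)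
    (h5 : Fintype.card V ≠ 5) :
    ∃ G : SimpleGraph V, G.Connected ∧ ∃ θ : V → ℝ, IsCDE G θ := by
  obtain ⟨n, h_even | h_odd⟩ := Nat.even_or_odd' (Fintype.card V)
  · exact exists_connected_isCDE_of_card_eq (m := n - 1) (k := 1) (by lia) (by lia) (by lia)
  · exact exists_connected_isCDE_of_card_eq (m := n - 1) (k := 2) (by lia) (by lia) (by lia)

/-- for every `N ≥ 6` there is a connected graph on `Fin N` admitting a
completely degenerate equilibrium. -/
theorem stmt6 (N : ℕ) (hN : 6 ≤ N) :
    ∃ G : SimpleGraph (Fin N), G.Connected ∧ ∃ θ : Fin N → ℝ, IsCDE G θ :=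
  stmt6_general (by simp; lia) (by simp; lia)
end

section
/- Let G be a connected simple graph on Fin N and suppose G has a closed walk p that is Eulerian (uses every edge of G exactly once) and satisfies: for all indices i, j ≤ length of p, if the i-th vertex of p equals the j-th vertex of p then 4 divides i − j. Define θ : Fin N → ℝ by θ(v) = i·π/2 whenever v is the i-th vertex of p (this is well defined modulo 2π by the divisibility hypothesis). Then θ is a completely degenerate equilibrium of the identical Kuramoto system on G. -/
open Real

/-!
An antisymmetric coupling that takes the same value `c` on every step of a closed walk is balanced
at each vertex `k`: a step leaving `k` contributes `c`, a step entering `k` contributes `-c`, and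
a closed walk leaves `k` as often as it enters `k`. If the walk is Eulerian, summing over its steps
is summing over the edges of the graph. Here the coupling is `sin (θ b - θ a)`, and phases advancing
by `π / 2` give it the value `1` on every step, which also makes the cosine vanish on every edge.
-/

section Walk

variable {V M : Type*} {G : SimpleGraph V}

lemma map_fst_darts_perm_map_snd_darts {v : V} (p : G.Walk v v) :
    (p.darts.map (·.fst)).Perm (p.darts.map (·.snd)) := by
  refine (List.perm_cons v).1 ?_
  rw [p.cons_map_snd_darts, ← p.map_fst_darts_append]
  exact (List.perm_append_singleton v _).symm

variable [Fintype V] [DecidableEq V]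

lemma sum_ite_edge_eq [AddCommMonoid M] (d : G.Dart) (f : V → M) (k : V) :
    ∑ j, (if d.edge = s(j, k) then f j else 0) =
      (if d.fst = k then f d.snd else 0) + (if d.snd = k then f d.fst else 0) := by
  have hne : d.fst ≠ d.snd := d.fst_ne_snd
  have hsplit (j : V) : (if d.edge = s(j, k) then f j else 0) =
      (if d.snd = j then (if d.fst = k then f j else 0) else 0) +
        (if d.fst = j then (if d.snd = k then f j else 0) else 0) := by
    have hedge : d.edge = s(j, k) ↔ d.fst = j ∧ d.snd = k ∨ d.fst = k ∧ d.snd = j :=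
      SimpleGraph.dart_edge_eq_mk'_iff' (d := d)
    by_cases hj : d.fst = j <;> by_cases hj' : d.snd = j <;> simp_all
  simp only [hsplit, Finset.sum_add_distrib, Finset.sum_ite_eq, Finset.mem_univ, if_true]

lemma sum_count_edges_nsmul [AddCommMonoid M] {u w : V} (p : G.Walk u w) (f : V → M) (k : V) :
    ∑ j, p.edges.count s(j, k) • f j = (p.darts.map fun d ↦
      (if d.fst = k then f d.snd else 0) + (if d.snd = k then f d.fst else 0)).sum := by
  rw [p.edges_eq_map_darts]
  induction p.darts with
  | nil => simp
  | cons d l ih =>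
    simp only [List.map_cons, List.sum_cons, List.count_cons, beq_iff_eq, add_nsmul, ite_smul,
      one_nsmul, zero_nsmul, Finset.sum_add_distrib, ih, sum_ite_edge_eq]
    exact add_comm _ _

lemma sum_count_edges_nsmul_eq_zero [AddCommGroup M] {v : V} (p : G.Walk v v) {g : V → V → M}
    {c : M} (hanti : ∀ a b, g b a = -g a b) (hconst : ∀ d ∈ p.darts, g d.fst d.snd = c) (k : V) :
    ∑ j, p.edges.count s(j, k) • g k j = 0 := by
  have hterm : ∀ d ∈ p.darts,
      (if d.fst = k then g k d.snd else 0) + (if d.snd = k then g k d.fst else 0) =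
        (if d.fst = k then c else 0) + -(if d.snd = k then c else 0) := by
    intro d hd
    have hout : d.fst = k → g k d.snd = c := fun h ↦ h ▸ hconst d hd
    have hin : d.snd = k → g k d.fst = -c := fun h ↦ by rw [← h, hanti, hconst d hd]
    congr 1
    · split_ifs with h
      exacts [hout h, rfl]
    · split_ifs with h
      exacts [hin h, neg_zero.symm]
  have hbalance : (p.darts.map fun d ↦ if d.fst = k then c else 0).sum =
      (p.darts.map fun d ↦ if d.snd = k then c else 0).sum := by
    simpa only [List.map_map, Function.comp_def] using
      ((map_fst_darts_perm_map_snd_darts p).map fun x ↦ if x = k then c else 0).sum_eq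
  rw [sum_count_edges_nsmul, List.map_congr_left hterm, List.sum_map_add, hbalance,
    ← List.sum_map_add]
  simp

end Walk

section Kuramoto

variable {V : Type*} {G : SimpleGraph V}

lemma sin_sub_eq_one_of_mem_darts {u w : V} {p : G.Walk u w} {θ : V → ℝ}
    (hθ : ∀ i : ℕ, i ≤ p.length →
      ∃ m : ℤ, θ (p.getVert i) = (i : ℝ) * (π / 2) + 2 * π * m)
    {d : G.Dart} (hd : d ∈ p.darts) : sin (θ d.snd - θ d.fst) = 1 := by
  obtain ⟨i, hi, rfl⟩ := List.mem_iff_getElem.1 hd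
  have hlt : i < p.length := p.length_darts ▸ hi
  obtain ⟨m, hm⟩ := hθ i hlt.le
  obtain ⟨n, hn⟩ := hθ (i + 1) hlt
  have hstep : θ (p.getVert (i + 1)) - θ (p.getVert i) =
      π / 2 + ((n - m : ℤ) : ℝ) * (2 * π) := by
    rw [hm, hn]
    push_cast
    ring
  rw [p.darts_getElem_eq_getVert, hstep, sin_add_int_mul_two_pi, sin_pi_div_two]

lemma cos_sub_eq_zero_of_sin_darts_eq_one {u w : V} {p : G.Walk u w} {θ : V → ℝ}
    (hsin : ∀ d ∈ p.darts, sin (θ d.snd - θ d.fst) = 1) {j k : V} (hjk : s(j, k) ∈ p.edges) :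
    cos (θ j - θ k) = 0 := by
  rw [p.edges_eq_map_darts] at hjk
  obtain ⟨d, hd, hedge⟩ := List.mem_map.1 hjk
  have hcos : cos (θ d.snd - θ d.fst) = 0 := cos_eq_zero_iff_sin_eq.2 (.inl (hsin d hd))
  rcases SimpleGraph.dart_edge_eq_mk'_iff'.1 hedge with ⟨rfl, rfl⟩ | ⟨rfl, rfl⟩
  · rwa [← cos_neg, neg_sub]
  · exact hcos

variable [DecidableEq V]

lemma count_edges_eq_adjInd {u w : V} {p : G.Walk u w} (hp : p.IsEulerian) (j k : V) :
    (p.edges.count s(j, k) : ℝ) = adjInd G j k := by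
  unfold adjInd
  split_ifs with hjk
  · rw [hp _ hjk, Nat.cast_one]
  · rw [List.count_eq_zero_of_not_mem (mt hp.mem_edges_iff.1 hjk), Nat.cast_zero]

lemma isCDE_of_sin_darts_eq_one [Fintype V] {v : V} {p : G.Walk v v} (hp : p.IsEulerian)
    {θ : V → ℝ} (hsin : ∀ d ∈ p.darts, sin (θ d.snd - θ d.fst) = 1) : IsCDE G θ := by
  refine ⟨fun k ↦ ?_, fun j k hjk ↦
    cos_sub_eq_zero_of_sin_darts_eq_one hsin (hp.mem_edges_iff.2 hjk)⟩
  have hanti (a b : V) : sin (θ a - θ b) = -sin (θ b - θ a) := by rw [← sin_neg, neg_sub]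
  simpa only [nsmul_eq_mul, count_edges_eq_adjInd hp] using
    sum_count_edges_nsmul_eq_zero p (g := fun a b ↦ sin (θ b - θ a)) hanti hsin k

end Kuramoto

theorem stmt7_general {V : Type*} [Fintype V] [DecidableEq V] (G : SimpleGraph V)
    (v : V) (p : G.Walk v v) (hp : p.IsEulerian) (θ : V → ℝ)
    (hθ : ∀ i : ℕ, i ≤ p.length →
      ∃ m : ℤ, θ (p.getVert i) = (i : ℝ) * (π / 2) + 2 * π * m) :
    IsCDE G θ :=
  isCDE_of_sin_darts_eq_one hp fun _ hd ↦ sin_sub_eq_one_of_mem_darts hθ hd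

/-- if a connected graph has an Eulerian circuit in which the number of steps
between any two visits at the same vertex is a multiple of four, then the phase assignment
increasing by `π/2` at each step (any representatives mod `2π`) is a completely degenerate
equilibrium. -/
theorem stmt7 {N : ℕ} (G : SimpleGraph (Fin N)) (hG : G.Connected)
    (v : Fin N) (p : G.Walk v v) (hp : p.IsEulerian)
    (hdiv : ∀ i j : ℕ, i ≤ p.length → j ≤ p.length →
      p.getVert i = p.getVert j → (4 : ℤ) ∣ (i : ℤ) - (j : ℤ))
    (θ : Fin N → ℝ)
    (hθ : ∀ i : ℕ, i ≤ p.length →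
      ∃ m : ℤ, θ (p.getVert i) = (i : ℝ) * (π / 2) + 2 * π * m) :
    IsCDE G θ :=
  stmt7_general G v p hp θ hθ
end

section
/- Let G be a connected simple graph on Fin N and let θ : Fin N → ℝ be a completely degenerate equilibrium of the identical Kuramoto system on G. Then G has a closed walk p that is Eulerian (uses every edge of G exactly once) such that at each step of p the phase increases by π/2 modulo 2π: for every index i < length of p, θ(v_{i+1}) ≡ θ(v_i) + π/2 (mod 2π), where v_i denotes the i-th vertex of p. In particular, for all i, j ≤ length of p, if v_i = v_j then 4 divides i − j. -/
open Real

/-!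
At every vertex each incident edge contributes `sin (θ j - θ k) = ±1` to the equilibrium equation,
because the cosine vanishes. Directing every edge towards the endpoint a quarter turn ahead thus
gives an orientation whose in- and out-degrees agree, since the sines at a vertex sum to zero. A
longest directed trail of such an orientation cannot be extended, so by counting arcs at its last
vertex it closes up; being longest after every rotation too, it uses all edges at each vertex it
visits, hence all edges by connectedness. Following it, the phase gains `π / 2` per step, and after
`i - j` steps it can return to the same value only if `(i - j) * (π / 2)` is a multiple of `2 * π`.
-/

section DirectedTrail

variable {V : Type*} {G : SimpleGraph V} {R : V → V → Prop} {u v w : V}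

/-- `R` is an orientation of the simple graph `G`: for each edge `s(u, v)` exactly one of the arcs
`R u v` and `R v u` is present, and there are no other arcs. -/
structure IsOrientation (G : SimpleGraph V) (R : V → V → Prop) : Prop where
  adj_iff : ∀ {u v}, G.Adj u v ↔ R u v ∨ R v u
  asymm : ∀ {u v}, R u v → ¬ R v u

theorem IsOrientation.adj (hR : IsOrientation G R) (h : R u v) : G.Adj u v :=
  hR.adj_iff.2 (Or.inl h)

/-- The directed graph with arcs `R` is balanced: out-degree and in-degree agree at every vertex.
Degrees are `Set.ncard`s, so this is meaningful only if they are finite. -/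
def IsBalanced (R : V → V → Prop) : Prop :=
  ∀ v, {w | R v w}.ncard = {w | R w v}.ncard

/-- A directed trail: a trail of `G` that traverses each of its edges along an arc of `R`. -/
structure IsDirectedTrail (R : V → V → Prop) (p : G.Walk u v) : Prop where
  isTrail : p.IsTrail
  rel : ∀ d ∈ p.darts, R d.fst d.snd

/-- A directed trail of `G` along `R` of maximal length among all such trails, whatever their
endpoints. -/
structure IsLongestDirectedTrail (R : V → V → Prop) (p : G.Walk u v) : Prop
    extends IsDirectedTrail R p where
  length_le : ∀ {a b : V} {q : G.Walk a b}, IsDirectedTrail R q → q.length ≤ p.length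

namespace IsDirectedTrail

theorem nil : IsDirectedTrail R (SimpleGraph.Walk.nil : G.Walk u u) :=
  ⟨.nil, by simp⟩

theorem cons {p : G.Walk u v} (hp : IsDirectedTrail R p) (h : G.Adj w u) (hwu : R w u)
    (hnew : s(w, u) ∉ p.edges) : IsDirectedTrail R (p.cons h) where
  isTrail := hp.isTrail.cons h hnew
  rel := by simpa using ⟨hwu, hp.rel⟩

theorem concat {p : G.Walk u v} (hp : IsDirectedTrail R p) (h : G.Adj v w) (hvw : R v w)
    (hnew : s(v, w) ∉ p.edges) : IsDirectedTrail R (p.concat h) where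
  isTrail := by
    rw [SimpleGraph.Walk.isTrail_def, SimpleGraph.Walk.edges_concat]
    exact hp.isTrail.edges_nodup.concat hnew
  rel d hd := by
    rw [SimpleGraph.Walk.darts_concat, List.concat_eq_append, List.mem_append,
      List.mem_singleton] at hd
    rcases hd with hd | rfl
    · exact hp.rel d hd
    · exact hvw

theorem rotate [DecidableEq V] {p : G.Walk v v} (hp : IsDirectedTrail R p) (hu : u ∈ p.support) :
    IsDirectedTrail R (p.rotate u hu) where
  isTrail := hp.isTrail.rotate hu
  rel d hd := hp.rel d ((p.rotate_darts u hu).mem_iff.1 hd)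

theorem rel_getVert {p : G.Walk u v} (hp : IsDirectedTrail R p) {i : ℕ} (hi : i < p.length) :
    R (p.getVert i) (p.getVert (i + 1)) := by
  have hi' : i < p.darts.length := by rwa [p.length_darts]
  have h := hp.rel p.darts[i] (List.getElem_mem hi')
  rwa [SimpleGraph.Walk.darts_getElem_eq_getVert] at h

theorem count_snd_darts_le [Finite V] [DecidableEq V] {p : G.Walk u v}
    (hp : IsDirectedTrail R p) (x : V) :
    (p.darts.map (·.snd)).count x ≤ {w | R w x}.ncard := by
  set L := p.darts.filter (·.snd == x) with hL
  have hnodup : (L.map (·.fst)).Nodup := by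
    refine List.Nodup.map_on ?_ ((List.Nodup.of_map _ hp.isTrail.edges_nodup).filter _)
    intro d hd e he hde
    simp only [hL, List.mem_filter, beq_iff_eq] at hd he
    exact SimpleGraph.Dart.ext _ _ (Prod.ext hde (hd.2.trans he.2.symm))
  have hsub : ((L.map (·.fst)).toFinset : Set V) ⊆ {w | R w x} := by
    intro w hw
    simp only [hL, List.coe_toFinset, List.mem_map, List.mem_filter, beq_iff_eq,
      Set.mem_ofPred_eq] at hw
    obtain ⟨d, ⟨hd, rfl⟩, rfl⟩ := hw
    exact hp.rel d hd
  calc (p.darts.map (·.snd)).count x = (L.map (·.fst)).length := by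
        rw [hL, List.length_map, List.count, List.countP_map, List.countP_eq_length_filter,
          Function.comp_def]
    _ = ((L.map (·.fst)).toFinset : Set V).ncard := by
        rw [Set.ncard_coe_finset, List.toFinset_card_of_nodup hnodup]
    _ ≤ {w | R w x}.ncard := Set.ncard_le_ncard hsub

theorem le_count_fst_darts [DecidableEq V] (hR : IsOrientation G R) {p : G.Walk u v}
    (hp : IsDirectedTrail R p) {x : V} (hx : ∀ w, R x w → s(x, w) ∈ p.edges) :
    {w | R x w}.ncard ≤ (p.darts.map (·.fst)).count x := by
  set L := p.darts.filter (·.fst == x) with hL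
  have hsub : {w | R x w} ⊆ ((L.map (·.snd)).toFinset : Set V) := by
    intro w hxw
    obtain ⟨d, hd, hdxw⟩ := List.mem_map.1 (hx w hxw)
    simp only [hL, List.coe_toFinset, List.mem_map, List.mem_filter, beq_iff_eq,
      Set.mem_ofPred_eq]
    rcases SimpleGraph.dart_edge_eq_mk'_iff'.1 hdxw with ⟨hfst, hsnd⟩ | ⟨hfst, hsnd⟩
    · exact ⟨d, ⟨hd, hfst⟩, hsnd⟩
    · exact absurd (hfst ▸ hsnd ▸ hp.rel d hd) (hR.asymm hxw)
  calc {w | R x w}.ncard ≤ ((L.map (·.snd)).toFinset : Set V).ncard := Set.ncard_le_ncard hsub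
    _ ≤ (L.map (·.snd)).length := by
        rw [Set.ncard_coe_finset]
        exact List.toFinset_card_le _
    _ = (p.darts.map (·.fst)).count x := by
        rw [hL, List.length_map, List.count, List.countP_map, List.countP_eq_length_filter,
          Function.comp_def]

end IsDirectedTrail

theorem count_snd_darts_eq_count_fst_darts_add_one [DecidableEq V] (p : G.Walk u v)
    (huv : u ≠ v) :
    (p.darts.map (·.snd)).count v = (p.darts.map (·.fst)).count v + 1 := by
  have hsupport : (u :: p.darts.map (·.snd)).count v = (p.darts.map (·.fst) ++ [v]).count v := by
    rw [p.cons_map_snd_darts, p.map_fst_darts_append]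
  simpa [huv] using hsupport

theorem exists_isLongestDirectedTrail [Nonempty V] [Finite G.edgeSet] (R : V → V → Prop) :
    ∃ (u v : V) (p : G.Walk u v), IsLongestDirectedTrail R p := by
  classical
  have := Fintype.ofFinite G.edgeSet
  let lengths : Set ℕ := {n | ∃ (u v : V) (p : G.Walk u v), IsDirectedTrail R p ∧ p.length = n}
  have hne : lengths.Nonempty := ⟨0, Classical.arbitrary V, _, _, .nil, rfl⟩
  have hbdd : BddAbove lengths := by
    refine ⟨G.edgeFinset.card, ?_⟩
    rintro _ ⟨u, v, p, hp, rfl⟩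
    exact hp.isTrail.length_le_card_edgeFinset
  obtain ⟨u, v, p, hp, hlen⟩ := Nat.sSup_mem hne hbdd
  exact ⟨u, v, p, hp, fun hq => hlen ▸ le_csSup hbdd ⟨_, _, _, hq, rfl⟩⟩

namespace IsLongestDirectedTrail

theorem rotate [DecidableEq V] {p : G.Walk v v} (hp : IsLongestDirectedTrail R p)
    (hu : u ∈ p.support) : IsLongestDirectedTrail R (p.rotate u hu) where
  toIsDirectedTrail := hp.toIsDirectedTrail.rotate hu
  length_le hq := by simpa using hp.length_le hq

theorem mem_edges_of_rel_start {p : G.Walk u v} (hp : IsLongestDirectedTrail R p)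
    (hR : IsOrientation G R) (h : R w u) : s(w, u) ∈ p.edges := by
  by_contra hnew
  simpa using hp.length_le (hp.cons (hR.adj h) h hnew)

theorem mem_edges_of_rel_end {p : G.Walk u v} (hp : IsLongestDirectedTrail R p)
    (hR : IsOrientation G R) (h : R v w) : s(v, w) ∈ p.edges := by
  by_contra hnew
  simpa using hp.length_le (hp.concat (hR.adj h) h hnew)

theorem start_eq_end [Finite V] {p : G.Walk u v} (hp : IsLongestDirectedTrail R p)
    (hR : IsOrientation G R) (hbal : IsBalanced R) : u = v := by
  classical
  by_contra huv
  have hout := hp.le_count_fst_darts hR (fun _ => hp.mem_edges_of_rel_end hR)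
  have hin := hp.count_snd_darts_le v
  have hcount := count_snd_darts_eq_count_fst_darts_add_one p huv
  have hv := hbal v
  omega

theorem mem_edges_of_adj {p : G.Walk v v} (hp : IsLongestDirectedTrail R p)
    (hR : IsOrientation G R) (hu : u ∈ p.support) (h : G.Adj u w) : s(u, w) ∈ p.edges := by
  classical
  rw [← (p.rotate_edges u hu).mem_iff]
  rcases hR.adj_iff.1 h with huw | hwu
  · exact (hp.rotate hu).mem_edges_of_rel_end hR huw
  · exact Sym2.eq_swap ▸ (hp.rotate hu).mem_edges_of_rel_start hR hwu

end IsLongestDirectedTrail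

theorem isEulerian_of_forall_mem_support [DecidableEq V] {p : G.Walk u v} (hG : G.Preconnected)
    (hp : p.IsTrail) (hinc : ∀ x ∈ p.support, ∀ y, G.Adj x y → s(x, y) ∈ p.edges) :
    p.IsEulerian := by
  have hsupport (x : V) : x ∈ p.support := by
    by_contra hx
    obtain ⟨q⟩ := hG u x
    obtain ⟨d, -, hfst, hsnd⟩ :=
      q.exists_boundary_dart {y | y ∈ p.support} p.start_mem_support hx
    exact hsnd (p.snd_mem_support_of_mem_edges (hinc _ hfst _ d.adj))
  refine hp.isEulerian_of_forall_mem fun e => ?_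
  induction e with
  | _ x y => exact hinc x (hsupport x) y

theorem exists_isEulerian_isDirectedTrail [Finite V] [DecidableEq V] (hG : G.Connected)
    (hR : IsOrientation G R) (hbal : IsBalanced R) :
    ∃ (v : V) (p : G.Walk v v), p.IsEulerian ∧ IsDirectedTrail R p := by
  have := hG.nonempty
  obtain ⟨u, v, p, hp⟩ := exists_isLongestDirectedTrail (G := G) R
  obtain rfl := hp.start_eq_end hR hbal
  exact ⟨u, p, isEulerian_of_forall_mem_support hG.preconnected hp.isTrail
    fun _ hx _ => hp.mem_edges_of_adj hR hx, hp.toIsDirectedTrail⟩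

end DirectedTrail

section QuarterTurn

variable {V : Type*} {G : SimpleGraph V} {θ : V → ℝ} {u v : V}

/-- The arcs of `G` along which the phase `θ` advances by a quarter turn modulo `2 * π`, expressed
through the sine of the phase difference. -/
def QuarterTurn (G : SimpleGraph V) (θ : V → ℝ) (u v : V) : Prop :=
  G.Adj u v ∧ sin (θ v - θ u) = 1

theorem QuarterTurn.exists_eq_add (h : QuarterTurn G θ u v) :
    ∃ m : ℤ, θ v = θ u + π / 2 + 2 * π * m := by
  obtain ⟨m, hm⟩ := sin_eq_one_iff.1 h.2
  exact ⟨m, by linarith⟩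

theorem sin_sub_eq_neg_one_iff (a b : ℝ) : sin (a - b) = -1 ↔ sin (b - a) = 1 := by
  rw [← neg_sub b a, sin_neg, neg_inj]

theorem isOrientation_quarterTurn (hcos : ∀ j k, G.Adj j k → cos (θ j - θ k) = 0) :
    IsOrientation G (QuarterTurn G θ) where
  adj_iff {u v} := by
    refine ⟨fun h => ?_, Or.rec (·.1) (·.1.symm)⟩
    rcases cos_eq_zero_iff_sin_eq.1 (hcos v u h.symm) with hs | hs
    · exact Or.inl ⟨h, hs⟩
    · exact Or.inr ⟨h.symm, (sin_sub_eq_neg_one_iff _ _).1 hs⟩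
  asymm {u v} huv hvu := by
    have hneg := (sin_sub_eq_neg_one_iff (θ u) (θ v)).2 huv.2
    linarith [hvu.2]

open Classical in
theorem adjInd_mul_sin_eq_sub (hcos : ∀ j k, G.Adj j k → cos (θ j - θ k) = 0) (j k : V) :
    adjInd G j k * sin (θ j - θ k) =
      (if QuarterTurn G θ k j then 1 else 0) - (if QuarterTurn G θ j k then 1 else 0) := by
  have hR := isOrientation_quarterTurn hcos
  by_cases hjk : G.Adj j k
  · rcases hR.adj_iff.1 hjk with h | h
    · have hs := (sin_sub_eq_neg_one_iff (θ j) (θ k)).2 h.2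
      simp [adjInd, hjk, hs, h, hR.asymm h]
    · simp [adjInd, hjk, h.2, h, hR.asymm h]
  · have h := mt hR.adj_iff.2 hjk
    rw [not_or] at h
    simp [adjInd, hjk, h.1, h.2]

theorem IsCDE.isBalanced_quarterTurn [Fintype V] (hθ : IsCDE G θ) :
    IsBalanced (QuarterTurn G θ) := by
  classical
  intro k
  have hsum := hθ.1 k
  simp only [adjInd_mul_sin_eq_sub hθ.2, Finset.sum_sub_distrib, Finset.sum_boole, sub_eq_zero,
    Nat.cast_inj] at hsum
  simpa only [Set.ncard_eq_toFinset_card', Set.toFinset_ofPred] using hsum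

theorem exists_eq_add_nat_mul_add {A : Type*} [CommRing A] {f : ℕ → A} {c T : A} {n : ℕ}
    (h : ∀ i < n, ∃ m : ℤ, f (i + 1) = f i + c + T * m) :
    ∀ i ≤ n, ∃ m : ℤ, f i = f 0 + i * c + T * m := by
  intro i
  induction i with
  | zero => exact fun _ => ⟨0, by simp⟩
  | succ i ih =>
    intro hi
    obtain ⟨m, hm⟩ := ih (by omega)
    obtain ⟨m', hm'⟩ := h i hi
    exact ⟨m + m', by rw [hm', hm]; push_cast; ring⟩

theorem four_dvd_sub_of_quarter_turns {f : ℕ → ℝ} {n : ℕ}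
    (h : ∀ i < n, ∃ m : ℤ, f (i + 1) = f i + π / 2 + 2 * π * m) {i j : ℕ} (hi : i ≤ n)
    (hj : j ≤ n) (hij : f i = f j) : (4 : ℤ) ∣ (i : ℤ) - j := by
  obtain ⟨a, ha⟩ := exists_eq_add_nat_mul_add h i hi
  obtain ⟨b, hb⟩ := exists_eq_add_nat_mul_add h j hj
  have hsub : (i : ℝ) - j = 4 * (b - a) :=
    mul_left_cancel₀ pi_ne_zero (by linarith)
  exact ⟨b - a, mod_cast hsub⟩

end QuarterTurn

theorem stmt8_general {V : Type*} [Fintype V] [DecidableEq V] (G : SimpleGraph V)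
    (hG : G.Connected) (θ : V → ℝ) (hθ : IsCDE G θ) :
    ∃ (v : V) (p : G.Walk v v), p.IsEulerian ∧
      (∀ i : ℕ, i < p.length →
        ∃ m : ℤ, θ (p.getVert (i + 1)) = θ (p.getVert i) + π / 2 + 2 * π * m) ∧
      ∀ i j : ℕ, i ≤ p.length → j ≤ p.length →
        p.getVert i = p.getVert j → (4 : ℤ) ∣ (i : ℤ) - (j : ℤ) := by
  obtain ⟨v, p, hp, hdir⟩ := exists_isEulerian_isDirectedTrail hG
    (isOrientation_quarterTurn hθ.2) hθ.isBalanced_quarterTurn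
  have hstep : ∀ i < p.length,
      ∃ m : ℤ, θ (p.getVert (i + 1)) = θ (p.getVert i) + π / 2 + 2 * π * m :=
    fun _ hi => (hdir.rel_getVert hi).exists_eq_add
  exact ⟨v, p, hp, hstep, fun i j hi hj hij =>
    four_dvd_sub_of_quarter_turns (f := fun i => θ (p.getVert i)) hstep hi hj (congrArg θ hij)⟩

/-- a completely degenerate equilibrium on a connected graph (with at least one
edge) yields an Eulerian circuit along which the phase increases by `π/2 (mod 2π)` at each
step; in particular the number of steps between any two visits at the same vertex is a
multiple of four. -/
theorem stmt8 {N : ℕ} (G : SimpleGraph (Fin N)) (hG : G.Connected)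
    (hE : G.edgeSet.Nonempty) (θ : Fin N → ℝ) (hθ : IsCDE G θ) :
    ∃ (v : Fin N) (p : G.Walk v v), p.IsEulerian ∧
      (∀ i : ℕ, i < p.length →
        ∃ m : ℤ, θ (p.getVert (i + 1)) = θ (p.getVert i) + π / 2 + 2 * π * m) ∧
      ∀ i j : ℕ, i ≤ p.length → j ≤ p.length →
        p.getVert i = p.getVert j → (4 : ℤ) ∣ (i : ℤ) - (j : ℤ) := by
  exact stmt8_general G hG θ hθ
end

section
/- Let G be a simple graph on Fin N containing a triangle (three mutually adjacent vertices). Then G admits no completely degenerate equilibrium of the identical Kuramoto system. -/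
open Real

theorem isBipartite_of_forall_adj_odd_sub {V : Type*} {G : SimpleGraph V} (f : V → ℤ)
    (h : ∀ j k, G.Adj j k → Odd (f j - f k)) : G.IsBipartite := by
  let parityColoring : G.Coloring (ZMod 2) := .mk (fun v => (f v : ZMod 2)) fun {j k} hjk heq => by
    have even_sub : Even (f j - f k) := by
      rw [← ZMod.intCast_eq_zero_iff_even, Int.cast_sub, heq, sub_self]
    exact Int.not_even_iff_odd.mpr (h j k hjk) even_sub
  exact parityColoring.colorable

theorem stmt9_general {V : Type*} {G : SimpleGraph V} {θ : V → ℝ}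
    (hcos : ∀ j k, G.Adj j k → cos (θ j - θ k) = 0) : G.IsBipartite :=
  isBipartite_of_forall_adj_odd_sub (fun v => ⌊θ v / (π / 2)⌋) fun j k hjk =>
    odd_floor_sub_floor_of_cos_sub_eq_zero (hcos j k hjk)

/-- a graph containing a triangle admits no completely degenerate
equilibrium. -/
theorem stmt9 {N : ℕ} (G : SimpleGraph (Fin N)) (i j k : Fin N)
    (hij : G.Adj i j) (hjk : G.Adj j k) (hik : G.Adj i k) :
    ¬ ∃ θ : Fin N → ℝ, IsCDE G θ := by
  rintro ⟨θ, -, hcos⟩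
  exact (stmt9_general hcos).cliqueFree (by norm_num) {i, j, k}
    (SimpleGraph.is3Clique_triple_iff.mpr ⟨hij, hik, hjk⟩)
end

section
/- Let G be a simple graph on Fin N, K ≠ 0 a real number, ω : Fin N → ℝ, and let θ : Fin N → ℝ be a completely degenerate equilibrium of the non-identical Kuramoto system with coupling K and frequencies ω. Then for every vertex k there exists an integer m with ω k = m·K. -/
open Real

/-- A completely degenerate equilibrium of the non-identical Kuramoto system with coupling
`K` and intrinsic frequencies `ω`. -/
def IsCDENonId {N : ℕ} (G : SimpleGraph (Fin N)) (K : ℝ) (ω θ : Fin N → ℝ) : Prop :=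
  (∀ k, ω k + K * ∑ j, adjInd G j k * Real.sin (θ j - θ k) = 0) ∧
  (∀ j k, G.Adj j k → Real.cos (θ j - θ k) = 0)

/-!
At a phase difference where the cosine vanishes the sine is `±1`, so with integer weights each
coupling sum is an integer, and the equilibrium equation equates `ω k` with minus that integer
times `K`.
-/

theorem sin_mem_range_intCast_of_cos_eq_zero {x : ℝ} (hx : cos x = 0) :
    sin x ∈ (Int.castRingHom ℝ).range := by
  rcases cos_eq_zero_iff_sin_eq.mp hx with hsin | hsin <;> rw [hsin]
  · exact one_mem _
  · exact neg_mem (one_mem _)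

theorem sum_mul_sin_mem_range_intCast_of_cos_eq_zero {ι : Type*} {s : Finset ι}
    {a x : ι → ℝ}
    (ha : ∀ i ∈ s, a i ∈ (Int.castRingHom ℝ).range)
    (hcos : ∀ i ∈ s, a i ≠ 0 → cos (x i) = 0) :
    ∑ i ∈ s, a i * sin (x i) ∈ (Int.castRingHom ℝ).range := by
  refine sum_mem fun i hi ↦ ?_
  obtain hzero | hne := eq_or_ne (a i) 0
  · simp only [hzero, zero_mul, zero_mem]
  · exact mul_mem (ha i hi) (sin_mem_range_intCast_of_cos_eq_zero (hcos i hi hne))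

theorem adjInd_mem_range_intCast {V : Type*} (G : SimpleGraph V) (j k : V) :
    adjInd G j k ∈ (Int.castRingHom ℝ).range := by
  unfold adjInd
  split_ifs
  · exact one_mem _
  · exact zero_mem _

theorem adjInd_ne_zero_iff {V : Type*} {G : SimpleGraph V} {j k : V} :
    adjInd G j k ≠ 0 ↔ G.Adj j k := by
  simp [adjInd]

theorem stmt14_general {V : Type*} [Fintype V] (a : V → V → ℝ) (K : ℝ) (ω θ : V → ℝ)
    (ha : ∀ j k, a j k ∈ (Int.castRingHom ℝ).range)
    (hω : ∀ k, ω k + K * ∑ j, a j k * sin (θ j - θ k) = 0)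
    (hcos : ∀ j k, a j k ≠ 0 → cos (θ j - θ k) = 0) :
    ∀ k, ∃ m : ℤ, ω k = (m : ℝ) * K := by
  intro k
  obtain ⟨m, hm⟩ : ∑ j, a j k * sin (θ j - θ k) ∈ (Int.castRingHom ℝ).range :=
    sum_mul_sin_mem_range_intCast_of_cos_eq_zero (fun j _ ↦ ha j k) (fun j _ ↦ hcos j k)
  refine ⟨-m, ?_⟩
  calc
    ω k = -(K * ∑ j, a j k * sin (θ j - θ k)) := eq_neg_of_add_eq_zero_left (hω k)
    _ = -(K * (m : ℝ)) := by rw [← hm, eq_intCast]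
    _ = ((-m : ℤ) : ℝ) * K := by push_cast; ring

/-- at a completely degenerate equilibrium of the non-identical system with
coupling `K ≠ 0`, every intrinsic frequency is an integer multiple of `K`. -/
theorem stmt14 {N : ℕ} (G : SimpleGraph (Fin N)) (K : ℝ) (hK : K ≠ 0)
    (ω θ : Fin N → ℝ) (h : IsCDENonId G K ω θ) :
    ∀ k : Fin N, ∃ m : ℤ, ω k = (m : ℝ) * K :=
  stmt14_general (adjInd G) K ω θ (adjInd_mem_range_intCast G) h.1 fun j k hjk ↦
    h.2 j k (adjInd_ne_zero_iff.mp hjk)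
end
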